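/- Let $G$ be a connected weighted graph and let $A, B \subseteq V(G)$ be disjoint nonempty sets. Let $I := \mathtt{Schur}(G, A \cup B)$ and let $P$ be the diagonal matrix indexed by $A \cup B$ with $P(u,u) = c_u^G$ (the degree of $u$ in $G$). Then the smallest nonzero eigenvalue $\lambda$ of $P^{-1/2} L_I P^{-1/2}$ satisfies $\lambda \ge \lambda_G$, where $\lambda_G$ is the smallest nonzero eigenvalue of the normalized Laplacian $N_G = D_G^{-1/2} L_G D_G^{-1/2}$. -/

import Mathlib

open Matrix MeasureTheory
open scoped Classical

/-- The (weighted) Laplacian matrix of the weighted graph on `V` with weights `c`. -/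
noncomputable def lapl {V : Type*} [Fintype V] [DecidableEq V] (c : V → V → ℝ) :
    Matrix V V ℝ :=
  fun u v => if u = v then ∑ w, c u w else -c u v

/-- The graph described by `L` is connected: the kernel of `L` consists of constants. -/
def LapConnected {V : Type*} [Fintype V] (L : Matrix V V ℝ) : Prop :=
  ∀ x : V → ℝ, L *ᵥ x = 0 → ∃ k : ℝ, ∀ v, x v = k

/-- The Schur complement of `L` onto the rows and columns indexed by `S`,
eliminating the vertices outside of `S`. -/
noncomputable def schur {V : Type*} [Fintype V] [DecidableEq V]
    (L : Matrix V V ℝ) (S : Set V) : Matrix S S ℝ :=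
  (Matrix.of fun i j : S => L i.1 j.1)
    - (Matrix.of fun (i : S) (j : {v : V // v ∉ S}) => L i.1 j.1)
        * (Matrix.of fun i j : {v : V // v ∉ S} => L i.1 j.1)⁻¹
        * (Matrix.of fun (i : {v : V // v ∉ S}) (j : S) => L i.1 j.1)

/-- `B` is the Moore–Penrose pseudoinverse of `A`. -/
def IsMPInv {n : Type*} [Fintype n] (A B : Matrix n n ℝ) : Prop :=
  A * B * A = A ∧ B * A * B = B ∧ (A * B)ᵀ = A * B ∧ (B * A)ᵀ = B * A

/-- The weighted degree of `v`. -/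
noncomputable def wdeg {V : Type*} [Fintype V] (c : V → V → ℝ) (v : V) : ℝ := ∑ u, c v u

/-- The smallest Rayleigh quotient of `M` over nonzero vectors orthogonal to `w`;
for a PSD matrix whose kernel is spanned by `w`, this is the smallest nonzero
eigenvalue of `M`. -/
noncomputable def rayleighMin {n : Type*} [Fintype n] (M : Matrix n n ℝ) (w : n → ℝ) : ℝ :=
  sInf {r : ℝ | ∃ x : n → ℝ, x ≠ 0 ∧ x ⬝ᵥ w = 0 ∧ r = (x ⬝ᵥ (M *ᵥ x)) / (x ⬝ᵥ x)}

/-- The normalized Laplacian `D^{-1/2} L D^{-1/2}`. -/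
noncomputable def normLapl {V : Type*} [Fintype V] [DecidableEq V] (c : V → V → ℝ) :
    Matrix V V ℝ :=
  fun u v => lapl c u v / (Real.sqrt (wdeg c u) * Real.sqrt (wdeg c v))

/-- `λ_G`, the smallest nonzero eigenvalue of the normalized Laplacian,
via its Rayleigh quotient characterization over vectors orthogonal to `D^{1/2} 1`. -/
noncomputable def lambdaG {V : Type*} [Fintype V] [DecidableEq V] (c : V → V → ℝ) : ℝ :=
  rayleighMin (normLapl c) (fun v => Real.sqrt (wdeg c v))

lemma lapl_mulVec {V : Type*} [Fintype V] [DecidableEq V] (c : V → V → ℝ)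
    (hdiag : ∀ v, c v v = 0) (x : V → ℝ) (v : V) :
    (lapl c *ᵥ x) v = ∑ w, c v w * (x v - x w) := by
  have h : ∀ w, lapl c v w * x w = (if v = w then (∑ u, c v u) * x v else 0) - c v w * x w := by
    intro w
    unfold lapl
    by_cases hvw : v = w
    · subst hvw; simp [hdiag]
    · simp [hvw]
  simp only [mulVec, dotProduct, h, Finset.sum_sub_distrib, mul_sub]
  simp [Finset.sum_mul]

lemma lapl_quad {V : Type*} [Fintype V] [DecidableEq V] (c : V → V → ℝ)
    (hsymm : ∀ u v, c u v = c v u) (hdiag : ∀ v, c v v = 0) (x : V → ℝ) :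
    2 * (x ⬝ᵥ (lapl c *ᵥ x)) = ∑ v, ∑ w, c v w * (x v - x w) ^ 2 := by
  have h1 : x ⬝ᵥ (lapl c *ᵥ x) = ∑ v, ∑ w, x v * (c v w * (x v - x w)) := by
    simp only [dotProduct, lapl_mulVec c hdiag, Finset.mul_sum]
  have h2 : x ⬝ᵥ (lapl c *ᵥ x) = ∑ v, ∑ w, x w * (c v w * (x w - x v)) := by
    rw [h1, Finset.sum_comm]
    refine Finset.sum_congr rfl fun v _ => Finset.sum_congr rfl fun w _ => ?_
    rw [hsymm w v]
  rw [two_mul]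
  nth_rewrite 1 [h1]
  rw [h2, ← Finset.sum_add_distrib]
  refine Finset.sum_congr rfl fun v _ => ?_
  rw [← Finset.sum_add_distrib]
  refine Finset.sum_congr rfl fun w _ => ?_
  ring

lemma lapl_quad_nonneg {V : Type*} [Fintype V] [DecidableEq V] (c : V → V → ℝ)
    (hsymm : ∀ u v, c u v = c v u) (hnonneg : ∀ u v, 0 ≤ c u v)
    (hdiag : ∀ v, c v v = 0) (x : V → ℝ) : 0 ≤ x ⬝ᵥ (lapl c *ᵥ x) := by
  have h := lapl_quad c hsymm hdiag x
  have : 0 ≤ ∑ v, ∑ w, c v w * (x v - x w) ^ 2 :=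
    Finset.sum_nonneg fun v _ => Finset.sum_nonneg fun w _ =>
      mul_nonneg (hnonneg v w) (sq_nonneg _)
  linarith

lemma lapl_quad_zero {V : Type*} [Fintype V] [DecidableEq V] (c : V → V → ℝ)
    (hsymm : ∀ u v, c u v = c v u) (hnonneg : ∀ u v, 0 ≤ c u v)
    (hdiag : ∀ v, c v v = 0) (x : V → ℝ) (h0 : x ⬝ᵥ (lapl c *ᵥ x) = 0) :
    lapl c *ᵥ x = 0 := by
  have h := lapl_quad c hsymm hdiag x
  rw [h0, mul_zero] at h
  have hn : ∀ v w, 0 ≤ c v w * (x v - x w) ^ 2 := fun v w =>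
    mul_nonneg (hnonneg v w) (sq_nonneg _)
  have h1 := (Finset.sum_eq_zero_iff_of_nonneg
    (fun v _ => Finset.sum_nonneg fun w _ => hn v w)).1 h.symm
  funext v
  rw [lapl_mulVec c hdiag]
  refine Finset.sum_eq_zero fun w _ => ?_
  have h2 := (Finset.sum_eq_zero_iff_of_nonneg (fun w _ => hn v w)).1
    (h1 v (Finset.mem_univ v)) w (Finset.mem_univ w)
  rcases mul_eq_zero.1 h2 with h3 | h3
  · simp [h3]
  · have := pow_eq_zero_iff (two_ne_zero) |>.1 h3
    simp [this]

lemma conj_quad {n : Type*} [Fintype n] (K : Matrix n n ℝ) (s y : n → ℝ) (hs : ∀ i, s i ≠ 0) :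
    (fun i => s i * y i) ⬝ᵥ ((show Matrix n n ℝ from fun i j => K i j / (s i * s j)) *ᵥ
      (fun i => s i * y i)) = y ⬝ᵥ (K *ᵥ y) := by
  simp only [dotProduct, mulVec, Finset.mul_sum]
  refine Finset.sum_congr rfl fun i _ => Finset.sum_congr rfl fun j _ => ?_
  have := hs i
  have := hs j
  field_simp

lemma wdeg_pos {V : Type*} [Fintype V] [DecidableEq V]
    (c : V → V → ℝ) (hsymm : ∀ u v, c u v = c v u) (hnonneg : ∀ u v, 0 ≤ c u v)
    (hdiag : ∀ v, c v v = 0) (hconn : LapConnected (lapl c)) {a b : V} (hab : a ≠ b) (v : V) :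
    0 < wdeg c v := by
  refine lt_of_le_of_ne (Finset.sum_nonneg fun w _ => hnonneg v w) fun h => ?_
  have h1 := (Finset.sum_eq_zero_iff_of_nonneg (fun w _ => hnonneg v w)).1 h.symm
  have h2 : ∀ w, c v w = 0 := fun w => h1 w (Finset.mem_univ w)
  obtain ⟨k, hk⟩ := hconn (Pi.single v 1) (by
    funext u
    rw [lapl_mulVec c hdiag]
    refine Finset.sum_eq_zero fun w _ => ?_
    by_cases hu : u = v
    · subst hu; simp [h2]
    · by_cases hw : w = v
      · subst hw; rw [hsymm, h2]; simp
      · simp [hu, hw])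
  have hv : k = 1 := by rw [← hk v]; simp
  obtain ⟨u, hu⟩ : ∃ u, u ≠ v := by
    by_cases h : a = v
    · exact ⟨b, fun h' => hab (h.trans h'.symm)⟩
    · exact ⟨a, h⟩
  have := hk u
  simp [hu, hv] at this

/-- Harmonic extension. -/
lemma exists_ext {V : Type*} [Fintype V] [DecidableEq V]
    (c : V → V → ℝ) (hsymm : ∀ u v, c u v = c v u) (hnonneg : ∀ u v, 0 ≤ c u v)
    (hdiag : ∀ v, c v v = 0) (hconn : LapConnected (lapl c)) (S : Set V) (hS : S.Nonempty)
    (y : S → ℝ) : ∃ z : V → ℝ, (∀ i : S, z i.1 = y i) ∧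
      z ⬝ᵥ (lapl c *ᵥ z) = y ⬝ᵥ (schur (lapl c) S *ᵥ y) := by
  set L := lapl c with hL
  set LTT := (Matrix.of fun i j : {v : V // v ∉ S} => L i.1 j.1) with hTT
  set LTS := (Matrix.of fun (i : {v : V // v ∉ S}) (j : S) => L i.1 j.1) with hTS
  set LST := (Matrix.of fun (i : S) (j : {v : V // v ∉ S}) => L i.1 j.1) with hST
  set LSS := (Matrix.of fun (i : S) (j : S) => L i.1 j.1) with hSS
  have key : ∀ (y : S → ℝ) (t : {v : V // v ∉ S} → ℝ), ∃ z : V → ℝ,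
      (∀ i : S, z i.1 = y i) ∧ (∀ i : {v : V // v ∉ S}, z i.1 = t i) ∧
      (∀ i : S, (L *ᵥ z) i.1 = (LSS *ᵥ y) i + (LST *ᵥ t) i) ∧
      (∀ i : {v : V // v ∉ S}, (L *ᵥ z) i.1 = (LTS *ᵥ y) i + (LTT *ᵥ t) i) := by
    intro y t
    set z : V → ℝ := fun v => if h : v ∈ S then y ⟨v, h⟩ else t ⟨v, h⟩ with hz
    have hz1 : ∀ i : S, z i.1 = y i := fun i => by simp [hz]
    have hz2 : ∀ i : {v : V // v ∉ S}, z i.1 = t i := fun i => by simp [hz, i.2]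
    have hm : ∀ v, (L *ᵥ z) v = (∑ j : S, L v j.1 * y j) +
        ∑ j : {v : V // v ∉ S}, L v j.1 * t j := by
      intro v
      simp only [mulVec, dotProduct]
      rw [← Fintype.sum_subtype_add_sum_subtype (fun v => v ∈ S)]
      congr 1
      · exact Finset.sum_congr rfl fun j _ => by rw [← hz1 j]
      · exact Finset.sum_congr rfl fun j _ => by rw [← hz2 j]
    exact ⟨z, hz1, hz2, fun i => hm i.1, fun i => hm i.1⟩
  have split : ∀ f : V → ℝ, ∑ v, f v = (∑ j : S, f j.1) + ∑ j : {v : V // v ∉ S}, f j.1 :=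
    fun f => (Fintype.sum_subtype_add_sum_subtype (fun v => v ∈ S) f).symm
  have hdet : IsUnit LTT.det := by
    rw [isUnit_iff_ne_zero]
    intro h0
    obtain ⟨t, ht0, ht⟩ := Matrix.exists_mulVec_eq_zero_iff.2 h0
    obtain ⟨z, hz1, hz2, hz3, hz4⟩ := key 0 t
    have hq : z ⬝ᵥ (L *ᵥ z) = 0 := by
      rw [dotProduct, split]
      simp [hz1, hz4, ht]
    obtain ⟨k, hk⟩ := hconn z (lapl_quad_zero c hsymm hnonneg hdiag z hq)
    obtain ⟨s, hs⟩ := hS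
    have hk0 : k = 0 := by rw [← hk s, hz1 ⟨s, hs⟩]; rfl
    apply ht0
    funext i
    rw [← hz2 i, hk, hk0]; rfl
  obtain ⟨z, hz1, hz2, hz3, hz4⟩ := key y (-(LTT⁻¹ *ᵥ (LTS *ᵥ y)))
  refine ⟨z, hz1, ?_⟩
  have h4 : ∀ i : {v : V // v ∉ S}, (L *ᵥ z) i.1 = 0 := by
    intro i
    rw [hz4, mulVec_neg, mulVec_mulVec, Matrix.mul_nonsing_inv _ hdet]
    simp
  have h3 : ∀ i : S, (L *ᵥ z) i.1 = (schur L S *ᵥ y) i := by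
    intro i
    have : schur L S = LSS - LST * LTT⁻¹ * LTS := rfl
    rw [hz3, this, sub_mulVec, mulVec_neg, ← mulVec_mulVec, ← mulVec_mulVec]
    simp [sub_eq_add_neg]
  rw [dotProduct, split]
  simp only [h4, h3, hz1, mul_zero, Finset.sum_const_zero, add_zero]
  rfl

lemma schur_aux {V : Type*} [Fintype V] [DecidableEq V]
    (c : V → V → ℝ) (hsymm : ∀ u v, c u v = c v u) (hnonneg : ∀ u v, 0 ≤ c u v)
    (hdiag : ∀ v, c v v = 0) (hconn : LapConnected (lapl c))
    (S : Set V) (a b : V) (haS : a ∈ S) (hbS : b ∈ S) (hne : a ≠ b) :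
    lambdaG c ≤
      rayleighMin
        (fun i j : S =>
          schur (lapl c) S i j / (Real.sqrt (wdeg c i.1) * Real.sqrt (wdeg c j.1)))
        (fun i : S => Real.sqrt (wdeg c i.1)) := by
  have hdeg := wdeg_pos c hsymm hnonneg hdiag hconn hne
  have hs : ∀ v, Real.sqrt (wdeg c v) ≠ 0 := fun v => (Real.sqrt_pos.2 (hdeg v)).ne'
  have hss : ∀ v, Real.sqrt (wdeg c v) * Real.sqrt (wdeg c v) = wdeg c v :=
    fun v => Real.mul_self_sqrt (hdeg v).le
  unfold lambdaG
  have hbdd : ∀ x : V → ℝ, 0 ≤ (x ⬝ᵥ (normLapl c *ᵥ x)) / (x ⬝ᵥ x) := by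
    intro x
    have hx : x = fun v => Real.sqrt (wdeg c v) * (x v / Real.sqrt (wdeg c v)) := by
      funext v
      have := hs v
      field_simp
    refine div_nonneg ?_ (Finset.sum_nonneg fun v _ => mul_self_nonneg _)
    have h := conj_quad (lapl c) (fun v => Real.sqrt (wdeg c v))
      (fun v => x v / Real.sqrt (wdeg c v)) hs
    rw [← hx] at h
    exact (lapl_quad_nonneg c hsymm hnonneg hdiag _).trans_eq h.symm
  unfold rayleighMin
  apply le_csInf
  · refine ⟨_, fun i : S => if i.1 = a then Real.sqrt (wdeg c b) else
      if i.1 = b then -Real.sqrt (wdeg c a) else 0, ?_, ?_, rfl⟩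
    · intro h
      have := congrFun h ⟨a, haS⟩
      simp only [if_true] at this
      exact hs b this
    · have hne' : (⟨a, haS⟩ : S) ≠ ⟨b, hbS⟩ := fun h => hne (congrArg Subtype.val h)
      rw [dotProduct, Finset.sum_eq_add (⟨a, haS⟩ : S) ⟨b, hbS⟩ hne']
      · simp [hne.symm]; ring
      · rintro i - ⟨h1, h2⟩
        have h1' : i.1 ≠ a := fun h => h1 (Subtype.ext h)
        have h2' : i.1 ≠ b := fun h => h2 (Subtype.ext h)
        simp [h1', h2']
      · simp
      · simp
  · rintro r ⟨x, hx0, hxw, rfl⟩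
    set y : S → ℝ := fun i => x i / Real.sqrt (wdeg c i.1) with hy
    have hx : x = fun i : S => Real.sqrt (wdeg c i.1) * y i := by
      funext i
      have := hs i.1
      simp only [hy]
      field_simp
    obtain ⟨z, hz1, hz2⟩ := exists_ext c hsymm hnonneg hdiag hconn S ⟨a, haS⟩ y
    have hnum := conj_quad (schur (lapl c) S) (fun i : S => Real.sqrt (wdeg c i.1)) y
      (fun i => hs i.1)
    rw [← hx, ← hz2] at hnum
    have hW : 0 < ∑ v, wdeg c v := Finset.sum_pos (fun v _ => hdeg v) ⟨a, Finset.mem_univ a⟩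
    obtain ⟨k, hk⟩ : ∃ k : ℝ, k = (∑ v, wdeg c v * z v) / ∑ v, wdeg c v := ⟨_, rfl⟩
    set z' : V → ℝ := fun v => z v - k with hz'
    have horth : ∑ v, wdeg c v * z' v = 0 := by
      simp only [hz', mul_sub, Finset.sum_sub_distrib, ← Finset.sum_mul]
      rw [hk]; field_simp; ring
    have hen : z' ⬝ᵥ (lapl c *ᵥ z') = z ⬝ᵥ (lapl c *ᵥ z) := by
      have h1 := lapl_quad c hsymm hdiag z'
      have h2 := lapl_quad c hsymm hdiag z
      simp only [hz', sub_sub_sub_cancel_right] at h1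
      simp only [hz']
      linarith
    set X : V → ℝ := fun v => Real.sqrt (wdeg c v) * z' v with hX
    have hXn : X ⬝ᵥ (normLapl c *ᵥ X) = z ⬝ᵥ (lapl c *ᵥ z) := by
      rw [← hen]
      exact conj_quad (lapl c) (fun v => Real.sqrt (wdeg c v)) z' hs
    have hXX : X ⬝ᵥ X = ∑ v, wdeg c v * z' v ^ 2 := by
      simp only [dotProduct, hX]
      refine Finset.sum_congr rfl fun v _ => ?_
      calc _ = (Real.sqrt (wdeg c v) * Real.sqrt (wdeg c v)) * z' v ^ 2 := by ring
        _ = _ := by rw [hss]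
    have hxx : x ⬝ᵥ x = ∑ i : S, wdeg c i.1 * y i ^ 2 := by
      rw [hx]
      simp only [dotProduct]
      refine Finset.sum_congr rfl fun i _ => ?_
      calc _ = (Real.sqrt (wdeg c i.1) * Real.sqrt (wdeg c i.1)) * y i ^ 2 := by ring
        _ = _ := by rw [hss]
    have hxw' : ∑ i : S, wdeg c i.1 * y i = 0 := by
      rw [← hxw, hx]
      simp only [dotProduct]
      refine Finset.sum_congr rfl fun i _ => ?_
      calc _ = (Real.sqrt (wdeg c i.1) * Real.sqrt (wdeg c i.1)) * y i := by rw [hss]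
        _ = _ := by ring
    have hxpos : 0 < x ⬝ᵥ x := by
      refine lt_of_le_of_ne (Finset.sum_nonneg fun v _ => mul_self_nonneg _) fun h => hx0 ?_
      exact dotProduct_self_eq_zero.1 h.symm
    have hle : x ⬝ᵥ x ≤ X ⬝ᵥ X := by
      rw [hXX, hxx, ← Fintype.sum_subtype_add_sum_subtype (fun v => v ∈ S)]
      have h1 : 0 ≤ ∑ j : {v : V // v ∉ S}, wdeg c j.1 * z' j.1 ^ 2 :=
        Finset.sum_nonneg fun j _ => mul_nonneg (hdeg _).le (sq_nonneg _)
      have h2 : ∑ i : S, wdeg c i.1 * z' i.1 ^ 2 = ∑ i : S, wdeg c i.1 * y i ^ 2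
          - 2 * k * ∑ i : S, wdeg c i.1 * y i + ∑ i : S, wdeg c i.1 * k ^ 2 := by
        rw [Finset.mul_sum, ← Finset.sum_sub_distrib, ← Finset.sum_add_distrib]
        refine Finset.sum_congr rfl fun i _ => ?_
        simp only [hz', hz1]
        ring
      have h3 : 0 ≤ ∑ i : S, wdeg c i.1 * k ^ 2 :=
        Finset.sum_nonneg fun j _ => mul_nonneg (hdeg _).le (sq_nonneg _)
      rw [hxw'] at h2
      have h4 : ∑ i : S, wdeg c i.1 * y i ^ 2 ≤ ∑ i : S, wdeg c i.1 * z' i.1 ^ 2 := by linarith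
      exact h4.trans (le_add_of_nonneg_right h1)
    refine le_trans (b := (X ⬝ᵥ (normLapl c *ᵥ X)) / (X ⬝ᵥ X))
      (csInf_le ⟨0, ?_⟩ ⟨X, ?_, ?_, rfl⟩) ?_
    · rintro r ⟨x, -, -, rfl⟩
      exact hbdd x
    · intro h
      rw [h] at hle
      simp at hle
      linarith
    · rw [← horth]
      simp only [dotProduct, hX]
      refine Finset.sum_congr rfl fun v _ => ?_
      calc _ = (Real.sqrt (wdeg c v) * Real.sqrt (wdeg c v)) * z' v := by ring
        _ = _ := by rw [hss]
    · rw [hXn]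
      refine (div_le_div_of_nonneg_left (lapl_quad_nonneg c hsymm hnonneg hdiag z)
        hxpos hle).trans_eq ?_
      rw [← hnum]

lemma schur_aux_inst {V : Type*} [Fintype V] [DecidableEq V]
    (c : V → V → ℝ) (hsymm : ∀ u v, c u v = c v u) (hnonneg : ∀ u v, 0 ≤ c u v)
    (hdiag : ∀ v, c v v = 0) (hconn : LapConnected (lapl c))
    (S : Set V) (a b : V) (haS : a ∈ S) (hbS : b ∈ S) (hne : a ≠ b) (inst : Fintype S) :
    lambdaG c ≤
      @rayleighMin S inst
        (fun i j : S =>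
          schur (lapl c) S i j / (Real.sqrt (wdeg c i.1) * Real.sqrt (wdeg c j.1)))
        (fun i : S => Real.sqrt (wdeg c i.1)) := by
  have h := schur_aux c hsymm hnonneg hdiag hconn S a b haS hbS hne
  obtain rfl : inst = _ := Subsingleton.elim inst (Subtype.fintype _)
  exact h

/-- The smallest nonzero eigenvalue of `P^{-1/2} L_I P^{-1/2}` (where `I` is the Schur
complement of `G` onto `A ∪ B` and `P` is the diagonal of `G`-degrees, and the kernel
of `L_I` is spanned by the all-ones vector so that the eigenvalue has a Rayleigh
quotient characterization over vectors orthogonal to `P^{1/2} 1`) is at least `λ_G`. -/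
theorem schur_normalized_eigenvalue_ge {V : Type*} [Fintype V] [DecidableEq V]
    (c : V → V → ℝ) (hsymm : ∀ u v, c u v = c v u) (hnonneg : ∀ u v, 0 ≤ c u v)
    (hdiag : ∀ v, c v v = 0) (hconn : LapConnected (lapl c))
    (A B : Set V) (hd : Disjoint A B) (hA : A.Nonempty) (hB : B.Nonempty) :
    lambdaG c ≤
      rayleighMin
        (fun i j : ↥(A ∪ B) =>
          schur (lapl c) (A ∪ B) i j / (Real.sqrt (wdeg c i.1) * Real.sqrt (wdeg c j.1)))
        (fun i : ↥(A ∪ B) => Real.sqrt (wdeg c i.1)) := by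
  have hab : ∃ a b : V, a ∈ A ∧ b ∈ B ∧ a ≠ b := by
    obtain ⟨a, ha⟩ := hA
    obtain ⟨b, hb⟩ := hB
    exact ⟨a, b, ha, hb, fun h => Set.disjoint_left.1 hd ha (h ▸ hb)⟩
  obtain ⟨a, b, ha, hb, hne⟩ := hab
  exact schur_aux_inst c hsymm hnonneg hdiag hconn (A ∪ B) a b (Or.inl ha) (Or.inr hb) hne _
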